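/- Let T₁, T₂ be non-crossing spanning trees on n points in convex position such that T₁ contains a subpath with t edges. Then there is a flip sequence between T₁ and T₂ of length at most 2n − t/3. -/

import Mathlib

open Finset

/-- An edge (chord) on `n` points in convex position, as an unordered pair of indices. -/
abbrev Edge (n : ℕ) := Sym2 (Fin n)

/-- The cyclic successor of a point. -/
def next {n : ℕ} (i : Fin n) : Fin n := ⟨((i : ℕ) + 1) % n, Nat.mod_lt _ i.pos⟩


/-- Chords `{a,b}` (with `a<b`) and `{c,d}` (with `c<d`) cross iff
`a<c<b<d` or `c<a<d<b`. -/
def Cross {n : ℕ} (e f : Edge n) : Prop :=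
  ∃ a b c d : Fin n, e = s(a, b) ∧ f = s(c, d) ∧ a < b ∧ c < d ∧
    ((a < c ∧ c < b ∧ b < d) ∨ (c < a ∧ a < d ∧ d < b))

/-- A set of chords is non-crossing if no two of its chords cross. -/
def NonCrossing {n : ℕ} (E : Finset (Edge n)) : Prop :=
  ∀ e ∈ E, ∀ f ∈ E, ¬ Cross e f

/-- A border edge joins two cyclically consecutive points (this includes `{n-1, 0}`,
i.e. `{v_n, v_1}`, since addition in `Fin n` wraps around). -/
def IsBorder {n : ℕ} (e : Edge n) : Prop := ∃ i : Fin n, e = s(i, next i)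

/-- A spanning tree on the `n` points, given by its edge set: loopless, connected,
with `n - 1` edges. -/
def IsSpanningTree {n : ℕ} (T : Finset (Edge n)) : Prop :=
  (SimpleGraph.fromEdgeSet (T : Set (Edge n))).Connected ∧
    T.card = n - 1 ∧ ∀ e ∈ T, ¬ e.IsDiag

/-- A non-crossing spanning tree. -/
def NCST {n : ℕ} (T : Finset (Edge n)) : Prop := IsSpanningTree T ∧ NonCrossing T

/-- A flip removes one edge and adds another so that the result is again a
non-crossing spanning tree. -/
def Flip {n : ℕ} (T T' : Finset (Edge n)) : Prop :=
  NCST T ∧ NCST T' ∧ ∃ e ∈ T, ∃ f, f ∉ T ∧ T' = insert f (T.erase e)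

/-- A flip sequence of length `k` from `T₁` to `T₂`. -/
def FlipSeq {n : ℕ} (T₁ T₂ : Finset (Edge n)) (k : ℕ) : Prop :=
  ∃ f : ℕ → Finset (Edge n), f 0 = T₁ ∧ f k = T₂ ∧ ∀ i < k, Flip (f i) (f (i + 1))

/-- There is a flip sequence from `T₁` to `T₂` of length at most `m`. -/
def FlipDistLE {n : ℕ} (T₁ T₂ : Finset (Edge n)) (m : ℕ) : Prop :=
  ∃ k ≤ m, FlipSeq T₁ T₂ k

/-!
Rotating the polygon, we may assume that the path runs from the point `0` to some point `p`.

Consider a caterpillar formed by the border path `0, 1, …, p` together with one leg from every point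
`b > p` to a point `g b ≤ p`, where `g` is antitone. Any non-crossing spanning tree that does not
contain it has a missing caterpillar chord that crosses no tree edge, so each tree becomes the
caterpillar by flips that each gain a caterpillar chord. Passing from `T₁` to `T₂` through a
caterpillar that shares `m` chords with `T₁` therefore takes at most `2 n - m` flips.

Split the `t` path edges by whether they run across `p`, that is, have one end at most `p` and the
other beyond `p`.
* Under every edge that does not run across `p`, the tree `T₁` has its own border edge, so the
  border path through all points shares at least as many chords with `T₁` as there are such edges.
* Attaching each `b > p` to the lowest point `a ≤ p` that `T₁` joins to one of `p + 1, …, b` gives a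
  caterpillar that contains a leg of `T₁` at the upper end of every path edge running across `p`.
  Each such end lies on at most two path edges, so at least half as many chords are shared.

If `s` edges run across `p`, the cheaper of the two caterpillars takes at most
`2 n - max (t - s) (s / 2) ≤ 2 n - t / 3` flips.
-/

lemma mk_inf_sup {α : Type*} [LinearOrder α] (e : Sym2 α) : s(e.inf, e.sup) = e :=
  Sym2.sortEquiv.left_inv e

lemma mem_iff_eq_inf_or_eq_sup {α : Type*} [LinearOrder α] {e : Sym2 α} {v : α} :
    v ∈ e ↔ v = e.inf ∨ v = e.sup := by
  rw [← Sym2.mem_iff, mk_inf_sup]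

lemma cross_iff_inf_sup {n : ℕ} {e f : Edge n} :
    Cross e f ↔ (e.inf < f.inf ∧ f.inf < e.sup ∧ e.sup < f.sup) ∨
      (f.inf < e.inf ∧ e.inf < f.sup ∧ f.sup < e.sup) := by
  constructor
  · rintro ⟨a, b, c, d, rfl, rfl, hab, hcd, h⟩
    simpa [hab.le, hcd.le] using h
  · intro h
    refine ⟨e.inf, e.sup, f.inf, f.sup, (mk_inf_sup e).symm, (mk_inf_sup f).symm, ?_, ?_, h⟩
      <;> omega

lemma cross_mk_mk {n : ℕ} {a b c d : Fin n} (hab : a ≤ b) (hcd : c ≤ d) :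
    Cross s(a, b) s(c, d) ↔ (a < c ∧ c < b ∧ b < d) ∨ (c < a ∧ a < d ∧ d < b) := by
  simp [cross_iff_inf_sup, hab, hcd]

lemma Cross.symm {n : ℕ} {e f : Edge n} (h : Cross e f) : Cross f e :=
  cross_iff_inf_sup.2 (cross_iff_inf_sup.1 h).symm

lemma not_cross_self {n : ℕ} (e : Edge n) : ¬ Cross e e := by
  simp [cross_iff_inf_sup]

lemma NonCrossing.insert {n : ℕ} {E : Finset (Edge n)} (hE : NonCrossing E) {f : Edge n}
    (hf : ∀ e ∈ E, ¬ Cross f e) : NonCrossing (insert f E) := by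
  simp only [NonCrossing, forall_mem_insert]
  exact ⟨⟨not_cross_self f, hf⟩, fun e he => ⟨fun h => hf e he h.symm, hE e he⟩⟩

lemma not_cross_of_covBy {n : ℕ} {i j : Fin n} (hij : i ⋖ j) (e : Edge n) :
    ¬ Cross s(i, j) e := by
  rw [Fin.covBy_iff, Nat.covBy_iff_add_one_eq] at hij
  have : i ≤ j := by omega
  simp only [cross_iff_inf_sup, Sym2.inf_mk, Sym2.sup_mk, inf_of_le_left this,
    sup_of_le_right this]
  omega

lemma reachable_fromEdgeSet_of_mem {V : Type*} {E : Set (Sym2 V)} {a b : V} (h : s(a, b) ∈ E) :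
    (SimpleGraph.fromEdgeSet E).Reachable a b := by
  by_cases hab : a = b
  · rw [hab]
  · exact SimpleGraph.Adj.reachable ((SimpleGraph.fromEdgeSet_adj _).2 ⟨h, hab⟩)

lemma isSpanningTree_of_connected_of_card_le {n : ℕ} {T : Finset (Edge n)}
    (hconn : (SimpleGraph.fromEdgeSet (T : Set (Edge n))).Connected) (hcard : #T ≤ n - 1) :
    IsSpanningTree T := by
  have hedges := hconn.card_vert_le_card_edgeSet_add_one
  rw [Nat.card_fin, SimpleGraph.edgeSet_fromEdgeSet, Nat.card_coe_set_eq] at hedges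
  have hsub : ((T : Set (Edge n)) \ Sym2.diagSet).ncard ≤ #T := by
    rw [← Set.ncard_coe_finset]
    exact Set.ncard_le_ncard Set.sdiff_subset
  refine ⟨hconn, by omega, fun e he hdiag => ?_⟩
  have hlt : ((T : Set (Edge n)) \ Sym2.diagSet).ncard < #T := by
    rw [← Set.ncard_coe_finset]
    exact Set.ncard_lt_ncard
      ((Set.ssubset_iff_of_subset Set.sdiff_subset).2 ⟨e, he, fun h => h.2 hdiag⟩)
  have := hconn.nonempty.some.pos
  omega

section SpanningTree

variable {n : ℕ} {S T : Finset (Edge n)}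

lemma IsSpanningTree.edgeSet_eq (hT : IsSpanningTree T) :
    (SimpleGraph.fromEdgeSet (T : Set (Edge n))).edgeSet = T := by
  rw [SimpleGraph.edgeSet_fromEdgeSet, sdiff_eq_left, Set.disjoint_left]
  exact hT.2.2

lemma IsSpanningTree.mem_edgeSet (hT : IsSpanningTree T) {e : Edge n} :
    e ∈ (SimpleGraph.fromEdgeSet (T : Set (Edge n))).edgeSet ↔ e ∈ T := by
  rw [hT.edgeSet_eq, mem_coe]

lemma IsSpanningTree.isTree (hT : IsSpanningTree T) :
    (SimpleGraph.fromEdgeSet (T : Set (Edge n))).IsTree := by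
  rw [SimpleGraph.isTree_iff_connected_and_card, hT.edgeSet_eq]
  have := hT.1.nonempty.some.pos
  refine ⟨hT.1, ?_⟩
  rw [Nat.card_coe_set_eq, Set.ncard_coe_finset, hT.2.1, Nat.card_fin]
  omega

lemma IsSpanningTree.not_reachable_sdiff (hT : IsSpanningTree T) {u v : Fin n}
    (h : s(u, v) ∈ T) :
    ¬ (SimpleGraph.fromEdgeSet ((T : Set (Edge n)) \ {s(u, v)})).Reachable u v := by
  have hbridge := SimpleGraph.isAcyclic_iff_forall_isBridge.1 hT.isTree.isAcyclic
    (hT.mem_edgeSet.2 h)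
  rwa [SimpleGraph.isBridge_iff, SimpleGraph.deleteEdges_fromEdgeSet] at hbridge

lemma IsSpanningTree.insert_erase (hT : IsSpanningTree T) {u v : Fin n} (huv : u ≠ v)
    (hf : s(u, v) ∉ T) {p : (SimpleGraph.fromEdgeSet (T : Set (Edge n))).Walk u v}
    (hp : p.IsPath) {e : Edge n} (he : e ∈ p.edges) :
    IsSpanningTree (insert s(u, v) (T.erase e)) := by
  induction e using Sym2.ind with | _ y z
  have hpT : ∀ e ∈ p.edges, e ∈ T := fun e h => hT.mem_edgeSet.1 (p.edges_subset_edgeSet h)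
  set G := SimpleGraph.fromEdgeSet (insert s(u, v) T : Set (Edge n)) with hG
  have hle : SimpleGraph.fromEdgeSet (T : Set (Edge n)) ≤ G :=
    SimpleGraph.fromEdgeSet_mono (Set.subset_insert _ _)
  have hadj : G.Adj v u := by simp [hG, Sym2.eq_swap, huv.symm]
  have hcycle : (SimpleGraph.Walk.cons hadj (p.mapLe hle)).IsCycle := by
    rw [SimpleGraph.Walk.cons_isCycle_iff, SimpleGraph.Walk.edges_mapLe_eq_edges, Sym2.eq_swap]
    exact ⟨by simpa using hp, fun h => hf (hpT _ h)⟩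
  have hconn := (hT.1.mono hle).connected_delete_edge_of_not_isBridge
    fun h : G.IsBridge s(y, z) => h.notMem_edges_of_isCycle hcycle (by simp [he])
  have hne : s(u, v) ≠ s(y, z) := fun h => hf (h ▸ hpT _ he)
  rw [hG, SimpleGraph.deleteEdges_fromEdgeSet, ← Set.insert_sdiff_singleton_comm hne] at hconn
  refine isSpanningTree_of_connected_of_card_le (by simpa using hconn) ?_
  have := card_erase_add_one (hpT _ he)
  grind [card_insert_le s(u, v) (T.erase s(y, z)), hT.2.1]

lemma IsSpanningTree.exchange (hT : IsSpanningTree T) (hS : IsSpanningTree S) {f : Edge n}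
    (hfS : f ∈ S) (hfT : f ∉ T) :
    ∃ e ∈ T, e ∉ S ∧ IsSpanningTree (insert f (T.erase e)) := by
  induction f using Sym2.ind with | _ u v
  obtain ⟨p, hp⟩ := hT.1.exists_isPath u v
  -- Some edge of the tree path from `u` to `v` leaves the component of `u` in `S - s(u, v)`.
  obtain ⟨d, hdp, hreach, hnreach⟩ := p.exists_boundary_dart
    {w | (SimpleGraph.fromEdgeSet ((S : Set (Edge n)) \ {s(u, v)})).Reachable u w}
    (SimpleGraph.Reachable.refl _) (hS.not_reachable_sdiff hfS)
  have hdT : d.edge ∈ T := hT.mem_edgeSet.1 d.edge_mem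
  refine ⟨d.edge, hdT, fun hdS => hnreach (hreach.trans (reachable_fromEdgeSet_of_mem ?_)),
    hT.insert_erase (fun h => hS.2.2 _ hfS h) hfT hp (List.mem_map_of_mem hdp)⟩
  exact ⟨hdS, fun h => hfT (h ▸ hdT)⟩

lemma NCST.exists_flip (hT : NCST T) (hS : NCST S) {f : Edge n} (hfS : f ∈ S) (hfT : f ∉ T)
    (hcross : ∀ e ∈ T, ¬ Cross f e) : ∃ e ∉ S, Flip T (insert f (T.erase e)) := by
  obtain ⟨e, heT, heS, htree⟩ := hT.1.exchange hS.1 hfS hfT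
  have hnc : NonCrossing (T.erase e) := fun a ha b hb =>
    hT.2 a (mem_of_mem_erase ha) b (mem_of_mem_erase hb)
  exact ⟨e, heS, hT, ⟨htree, hnc.insert fun a ha => hcross a (mem_of_mem_erase ha)⟩,
    e, heT, f, hfT, rfl⟩

end SpanningTree

section FlipSeq

variable {n : ℕ} {S T U : Finset (Edge n)} {k l : ℕ}

lemma Flip.symm (h : Flip T U) : Flip U T := by
  obtain ⟨hT, hU, e, he, f, hf, rfl⟩ := h
  have hef : e ≠ f := ne_of_mem_of_not_mem he hf
  refine ⟨hU, hT, f, mem_insert_self _ _, e, by simp [hef], ?_⟩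
  rw [erase_insert (by simp [hf]), insert_erase he]

lemma FlipSeq.refl (T : Finset (Edge n)) : FlipSeq T T 0 :=
  ⟨fun _ => T, rfl, rfl, by simp⟩

lemma Flip.flipSeq (h : Flip T U) : FlipSeq T U 1 :=
  ⟨fun i => if i = 0 then T else U, by simp, by simp, by simpa⟩

lemma FlipSeq.symm (h : FlipSeq T S k) : FlipSeq S T k := by
  obtain ⟨f, h0, hk, hf⟩ := h
  refine ⟨fun i => f (k - i), by simpa using hk, by simpa using h0, fun i hi => ?_⟩
  have := (hf (k - (i + 1)) (by omega)).symm
  rwa [show k - (i + 1) + 1 = k - i by omega] at this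

lemma FlipSeq.trans (h : FlipSeq T S k) (h' : FlipSeq S U l) : FlipSeq T U (k + l) := by
  obtain ⟨f, rfl, hfk, hf⟩ := h
  obtain ⟨g, hg0, rfl, hg⟩ := h'
  refine ⟨fun i => if i ≤ k then f i else g (i - k), by simp, ?_, fun i hi => ?_⟩
  · rcases l.eq_zero_or_pos with rfl | hl
    · simp [hfk, hg0]
    · simp [hl.ne']
  · rcases lt_trichotomy i k with hik | rfl | hik
    · simpa [hik.le, Nat.succ_le_of_lt hik] using hf i hik
    · simpa [hfk, hg0] using hg 0 (by omega)
    · have := hg (i - k) (by omega)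
      rw [show i - k + 1 = i + 1 - k by omega] at this
      simpa [hik.not_ge, show ¬ i + 1 ≤ k by omega] using this

end FlipSeq

/-- The tree `T` blocks the set `S` of chords: every chord of `S` missing from `T` is crossed by a
chord of `T`, so that adding chords of `S` to `T` greedily gets stuck. -/
def Blocks {n : ℕ} (T S : Finset (Edge n)) : Prop :=
  ∀ f ∈ S, f ∉ T → ∃ e ∈ T, Cross f e

/-- A non-crossing spanning tree blocking `S` contains `S`. Every tree can then be flipped to `S` by
adding one chord of `S` at a time. -/
def IsGreedyTarget {n : ℕ} (S : Finset (Edge n)) : Prop :=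
  ∀ T, NCST T → Blocks T S → S ⊆ T

namespace IsGreedyTarget

variable {n : ℕ} {S T T₁ T₂ : Finset (Edge n)}

lemma flipSeq (hgreedy : IsGreedyTarget S) (hS : NCST S) (hT : NCST T) :
    FlipSeq T S #(S \ T) := by
  induction hk : #(S \ T) generalizing T with
  | zero =>
    have hsub : S ⊆ T := sdiff_eq_empty_iff_subset.1 (card_eq_zero.1 hk)
    rw [eq_of_subset_of_card_le hsub (hT.1.2.1.trans hS.1.2.1.symm).le]
    exact .refl T
  | succ k ih =>
    obtain ⟨f, hfS, hfT, hcross⟩ : ∃ f ∈ S, f ∉ T ∧ ∀ e ∈ T, ¬ Cross f e := by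
      by_contra! hblocks
      simp [sdiff_eq_empty_iff_subset.2 (hgreedy T hT hblocks)] at hk
    obtain ⟨e, heS, hflip⟩ := hT.exists_flip hS hfS hfT hcross
    have hsdiff : S \ insert f (T.erase e) = (S \ T).erase f := by grind
    rw [Nat.add_comm]
    refine hflip.flipSeq.trans (ih hflip.2.1 ?_)
    rw [hsdiff, card_erase_of_mem (mem_sdiff.2 ⟨hfS, hfT⟩), hk, Nat.add_sub_cancel]

lemma exists_flipSeq (hgreedy : IsGreedyTarget S) (hS : NCST S) (h₁ : NCST T₁)
    (h₂ : NCST T₂) : ∃ k, FlipSeq T₁ T₂ k ∧ k + #(S ∩ T₁) ≤ 2 * n := by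
  refine ⟨_, (hgreedy.flipSeq hS h₁).trans (hgreedy.flipSeq hS h₂).symm, ?_⟩
  have hsplit := card_sdiff_add_card_inter S T₁
  have hle := card_le_card (sdiff_subset : S \ T₂ ⊆ S)
  have hcard := hS.1.2.1
  omega

end IsGreedyTarget

/-- No chord of `T` among the points beyond `p` separates `b` from the border path `0, …, p`,
so that every chord of `T` crossing a chord from `b` to that path has an end on it. -/
def Uncovered {n : ℕ} (T : Finset (Edge n)) (p b : Fin n) : Prop :=
  ∀ e ∈ T, p < e.inf → b ∉ Ioo e.inf e.sup

lemma uncovered_of_leg_mem {n : ℕ} {T : Finset (Edge n)} {p a b : Fin n} (hT : NonCrossing T)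
    (ha : a ≤ p) (hb : p < b) (h : s(a, b) ∈ T) : Uncovered T p b := by
  intro e he hpe
  have hnc := hT _ h e he
  rw [← mk_inf_sup e, cross_mk_mk (by omega) e.inf_le_sup] at hnc
  rw [mem_Ioo]
  omega

section Caterpillar

variable {n : ℕ} [NeZero n]

/-- The border path through the points `0, 1, …, p`. -/
def spine (p : Fin n) : Finset (Edge n) := (Ioc 0 p).image fun j => s(Order.pred j, j)

/-- The caterpillar consisting of `spine p` and, for every point `b` beyond `p`, the leg joining `b`
to its attachment point `g b`. It is meant for `g` antitone with values at most `p`, in which case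
no two legs cross. -/
def caterpillar (p : Fin n) (g : Fin n → Fin n) : Finset (Edge n) :=
  spine p ∪ (Ioi p).image fun b => s(g b, b)

variable {p : Fin n} {g : Fin n → Fin n} {T : Finset (Edge n)}

lemma mem_spine {e : Edge n} : e ∈ spine p ↔ ∃ i j, i ⋖ j ∧ j ≤ p ∧ e = s(i, j) := by
  simp only [spine, mem_image, mem_Ioc]
  constructor
  · rintro ⟨j, ⟨hj, hjp⟩, rfl⟩
    exact ⟨_, j, Order.pred_covBy_of_not_isMin hj.not_isMin, hjp, rfl⟩
  · rintro ⟨i, j, hij, hjp, rfl⟩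
    exact ⟨j, ⟨i.zero_le.trans_lt hij.lt, hjp⟩, by rw [hij.pred_eq]⟩

lemma mem_caterpillar {e : Edge n} :
    e ∈ caterpillar p g ↔ e ∈ spine p ∨ ∃ b, p < b ∧ e = s(g b, b) := by
  simp [caterpillar, eq_comm]

lemma caterpillar_top : caterpillar ⊤ g = spine ⊤ := by
  simp [caterpillar]

lemma leg_mem_caterpillar {b : Fin n} (hb : p < b) : s(g b, b) ∈ caterpillar p g :=
  mem_caterpillar.2 (.inr ⟨b, hb, rfl⟩)

lemma not_cross_of_mem_spine {e : Edge n} (he : e ∈ spine p) (f : Edge n) : ¬ Cross e f := by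
  obtain ⟨i, j, hij, -, rfl⟩ := mem_spine.1 he
  exact not_cross_of_covBy hij f

lemma sup_le_of_mem_spine {e : Edge n} (he : e ∈ spine p) : e.sup ≤ p := by
  obtain ⟨i, j, hij, hjp, rfl⟩ := mem_spine.1 he
  exact sup_le (hij.le.trans hjp) hjp

lemma reachable_of_spine_subset {E : Set (Edge n)} (hE : ↑(spine p) ⊆ E) {a : Fin n}
    (ha : a ≤ p) : (SimpleGraph.fromEdgeSet E).Reachable a p := by
  refine (SimpleGraph.reachable_iff_reflTransGen _ _).2
    (reflTransGen_of_succ_of_le _ (fun i hi => ?_) ha)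
  have hcov : i ⋖ Order.succ i := Order.covBy_succ_of_not_isMax hi.2.not_isMax
  exact (SimpleGraph.fromEdgeSet_adj _).2 ⟨hE (mem_coe.2 (mem_spine.2
    ⟨i, _, hcov, Order.succ_le_of_lt hi.2, rfl⟩)), hcov.ne⟩

lemma reachable_of_leg_mem {E : Set (Edge n)} (hE : ↑(spine p) ⊆ E) {a b : Fin n}
    (hab : s(a, b) ∈ E) (ha : a ≤ p) : (SimpleGraph.fromEdgeSet E).Reachable b p :=
  (reachable_fromEdgeSet_of_mem hab).symm.trans (reachable_of_spine_subset hE ha)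

lemma isSpanningTree_caterpillar (hgp : ∀ b, g b ≤ p) : IsSpanningTree (caterpillar p g) := by
  have hsp : ↑(spine p) ⊆ (caterpillar p g : Set (Edge n)) :=
    coe_subset.2 fun e he => mem_caterpillar.2 (.inl he)
  apply isSpanningTree_of_connected_of_card_le
  · refine (SimpleGraph.connected_iff_exists_forall_reachable _).2 ⟨p, fun b => .symm ?_⟩
    rcases le_or_gt b p with hb | hb
    · exact reachable_of_spine_subset hsp hb
    · exact reachable_of_leg_mem hsp (leg_mem_caterpillar hb) (hgp b)
  · have hspine : #(spine p) ≤ p := card_image_le.trans (by simp)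
    have hlegs : #((Ioi p).image fun b => s(g b, b)) ≤ n - 1 - p :=
      card_image_le.trans (Fin.card_Ioi p).le
    have := card_union_le (spine p) ((Ioi p).image fun b => s(g b, b))
    rw [caterpillar]
    omega

lemma ncst_caterpillar (hg : Antitone g) (hgp : ∀ b, g b ≤ p) : NCST (caterpillar p g) := by
  refine ⟨isSpanningTree_caterpillar hgp, fun e he f hf hcross => ?_⟩
  rcases mem_caterpillar.1 he with he | ⟨b, hb, rfl⟩
  · exact not_cross_of_mem_spine he f hcross
  rcases mem_caterpillar.1 hf with hf | ⟨c, hc, rfl⟩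
  · exact not_cross_of_mem_spine hf _ hcross.symm
  have hgb := hgp b
  have hgc := hgp c
  rw [cross_mk_mk (by omega) (by omega)] at hcross
  rcases le_total b c with hbc | hbc <;> have := hg hbc <;> omega

lemma lt_sup_of_notMem_spine (hT : IsSpanningTree T) (hsp : spine p ⊆ T) {e : Edge n}
    (he : e ∈ T) (hes : e ∉ spine p) : p < e.sup := by
  by_contra! hsup
  have hsub : ↑(spine p) ⊆ (T : Set (Edge n)) \ {s(e.inf, e.sup)} := fun f hf =>
    ⟨hsp hf, fun h => hes (by rwa [← mk_inf_sup e, ← Set.mem_singleton_iff.1 h])⟩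
  rw [← mk_inf_sup e] at he
  exact hT.not_reachable_sdiff he <|
    (reachable_of_spine_subset hsub (e.inf_le_sup.trans hsup)).trans
      (reachable_of_spine_subset hsub hsup).symm

lemma leg_unique (hT : IsSpanningTree T) (hsp : spine p ⊆ T) {a a' b : Fin n}
    (ha : a ≤ p) (ha' : a' ≤ p) (hb : p < b) (h : s(a, b) ∈ T) (h' : s(a', b) ∈ T) : a = a' := by
  by_contra hne
  have hsub : ↑(spine p) ⊆ (T : Set (Edge n)) \ {s(a, b)} := fun f hf =>
    ⟨hsp hf, by rintro rfl; exact (sup_le_of_mem_spine hf).not_gt (hb.trans_le le_sup_right)⟩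
  refine hT.not_reachable_sdiff h <| (reachable_of_spine_subset hsub ha).trans
    (reachable_of_leg_mem hsub ⟨h', ?_⟩ ha').symm
  simp only [Set.mem_singleton_iff, Sym2.eq_iff]
  omega

lemma notMem_of_legs_mem (hT : IsSpanningTree T) (hsp : spine p ⊆ T) {a a' b b' : Fin n}
    (ha : a ≤ p) (ha' : a' ≤ p) (hb : p < b) (hb' : p < b') (h : s(a, b) ∈ T) (h' : s(a', b') ∈ T) :
    s(b, b') ∉ T := by
  intro hbb'
  have hsub : ↑(spine p) ⊆ (T : Set (Edge n)) \ {s(b, b')} := fun f hf =>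
    ⟨hsp hf, by rintro rfl; exact (sup_le_of_mem_spine hf).not_gt (hb.trans_le le_sup_left)⟩
  refine hT.not_reachable_sdiff hbb' <| (reachable_of_leg_mem hsub ⟨h, ?_⟩ ha).trans
    (reachable_of_leg_mem hsub ⟨h', ?_⟩ ha').symm
  all_goals simp only [Set.mem_singleton_iff, Sym2.eq_iff]; omega

section Blocks

variable (hT : NCST T) (hgp : ∀ b, g b ≤ p) (hsp : spine p ⊆ T)
  (hblocks : Blocks T (caterpillar p g))

include hT hgp hsp hblocks

lemma exists_blocking_leg {b : Fin n} (hb : p < b) (hunc : Uncovered T p b)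
    (hmem : s(g b, b) ∉ T) : ∃ c d, s(c, d) ∈ T ∧ c ≤ p ∧ p < d ∧
      (g b < c ∧ b < d ∨ c < g b ∧ d < b) := by
  obtain ⟨e, he, hcross⟩ := hblocks _ (leg_mem_caterpillar hb) hmem
  have hgb := hgp b
  have hpe : p < e.sup := lt_sup_of_notMem_spine hT.1 hsp he
    fun hes => not_cross_of_mem_spine hes _ hcross.symm
  have hbe := hunc e he
  rw [mem_Ioo] at hbe
  rw [← mk_inf_sup e] at he hcross
  rw [cross_mk_mk (by omega) e.inf_le_sup] at hcross
  exact ⟨e.inf, e.sup, he, by omega, hpe, by omega⟩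

/-- If `T` attached `d` beyond `g d`, the missing leg at `d` would be blocked by a leg of `T` at
some `d' > d`, which by antitonicity is attached beyond `g d'` as well. -/
lemma le_of_leg_mem (hg : Antitone g) {c d : Fin n} (hc : c ≤ p) (hd : p < d)
    (h : s(c, d) ∈ T) : c ≤ g d := by
  induction d using WellFoundedGT.induction generalizing c with | ind d ih
  by_contra! hgc
  have hmem : s(g d, d) ∉ T := fun h' => hgc.ne (leg_unique hT.1 hsp (hgp d) hc hd h' h)
  obtain ⟨c', d', h', hc', hd', hlt | hlt⟩ := exists_blocking_leg hT hgp hsp hblocks hd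
    (uncovered_of_leg_mem hT.2 hc hd h) hmem
  · have := ih d' hlt.2 hc' hd' h'
    have := hg hlt.2.le
    omega
  · have hnc := hT.2 _ h _ h'
    rw [cross_mk_mk (by omega) (by omega)] at hnc
    omega

lemma ge_of_leg_mem (hg : Antitone g) {c d : Fin n} (hc : c ≤ p) (hd : p < d)
    (h : s(c, d) ∈ T) : g d ≤ c := by
  induction d using WellFoundedLT.induction generalizing c with | ind d ih
  by_contra! hgc
  have hmem : s(g d, d) ∉ T := fun h' => hgc.ne' (leg_unique hT.1 hsp (hgp d) hc hd h' h)
  obtain ⟨c', d', h', hc', hd', hlt | hlt⟩ := exists_blocking_leg hT hgp hsp hblocks hd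
    (uncovered_of_leg_mem hT.2 hc hd h) hmem
  · have hnc := hT.2 _ h _ h'
    rw [cross_mk_mk (by omega) (by omega)] at hnc
    omega
  · have := ih d' hlt.2 hc' hd' h'
    have := hg hlt.2.le
    omega

lemma leg_mem_of_uncovered (hg : Antitone g) {b : Fin n} (hb : p < b) (hunc : Uncovered T p b) :
    s(g b, b) ∈ T := by
  by_contra hmem
  obtain ⟨c, d, h, hc, hd, hlt⟩ := exists_blocking_leg hT hgp hsp hblocks hb hunc hmem
  have hcd : c = g d := (le_of_leg_mem hT hgp hsp hblocks hg hc hd h).antisymm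
    (ge_of_leg_mem hT hgp hsp hblocks hg hc hd h)
  rcases hlt with hlt | hlt <;> have := hg hlt.2.le <;> omega

/-- The ends of a widest chord beyond `p` would both be uncovered, so that their legs would close a
cycle with it. -/
lemma inf_le_of_blocks (hg : Antitone g) {e : Edge n} (he : e ∈ T) : e.inf ≤ p := by
  by_contra! hpe
  obtain ⟨e, he, hmax⟩ := exists_max_image {e ∈ T | p < e.inf} (fun e => (e.sup - e.inf : ℕ))
    ⟨e, mem_filter.2 ⟨he, hpe⟩⟩
  obtain ⟨he, hpe⟩ := mem_filter.1 he
  have hle := e.inf_le_sup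
  have hleg {b : Fin n} (hb : b = e.inf ∨ b = e.sup) : s(g b, b) ∈ T := by
    refine leg_mem_of_uncovered hT hgp hsp hblocks hg (by omega) fun f hf hpf => ?_
    have hwidth := hmax f (mem_filter.2 ⟨hf, hpf⟩)
    have hnc := hT.2 e he f hf
    rw [cross_iff_inf_sup] at hnc
    rw [mem_Ioo]
    omega
  refine notMem_of_legs_mem hT.1 hsp (hgp _) (hgp _) hpe (hpe.trans_le hle) (hleg (.inl rfl))
    (hleg (.inr rfl)) ?_
  rwa [← mk_inf_sup e] at he

end Blocks

lemma isGreedyTarget_caterpillar (hg : Antitone g) (hgp : ∀ b, g b ≤ p) :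
    IsGreedyTarget (caterpillar p g) := by
  intro T hT hblocks f hf
  have hsp : spine p ⊆ T := by
    intro e he
    by_contra hmem
    obtain ⟨f, -, hcross⟩ := hblocks e (mem_caterpillar.2 (.inl he)) hmem
    exact not_cross_of_mem_spine he f hcross
  rcases mem_caterpillar.1 hf with hf | ⟨b, hb, rfl⟩
  · exact hsp hf
  · exact leg_mem_of_uncovered hT hgp hsp hblocks hg hb
      fun e he hpe => absurd (inf_le_of_blocks hT hgp hsp hblocks hg he) hpe.not_ge

lemma exists_flipSeq_through_caterpillar (hg : Antitone g) (hgp : ∀ b, g b ≤ p)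
    {T₁ T₂ : Finset (Edge n)} (h₁ : NCST T₁) (h₂ : NCST T₂) :
    ∃ k, FlipSeq T₁ T₂ k ∧ k + #(caterpillar p g ∩ T₁) ≤ 2 * n :=
  (isGreedyTarget_caterpillar hg hgp).exists_flipSeq (ncst_caterpillar hg hgp) h₁ h₂

end Caterpillar

section Path

variable {t : ℕ}

/-- The `i`-th edge of the path `x 0, …, x t`. -/
def pathEdge {α : Type*} (x : Fin (t + 1) → α) (i : Fin t) : Sym2 α := s(x i.castSucc, x i.succ)

lemma card_mem_pathEdge_le_two {α : Type*} [DecidableEq α] {x : Fin (t + 1) → α}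
    (hx : Function.Injective x) (v : α) : #{i | v ∈ pathEdge x i} ≤ 2 := by
  have hleft : #{i : Fin t | v = x i.castSucc} ≤ 1 := card_le_one.2 fun i hi j hj =>
    Fin.castSucc_injective t (hx (by simp_all))
  have hright : #{i : Fin t | v = x i.succ} ≤ 1 := card_le_one.2 fun i hi j hj =>
    Fin.succ_injective t (hx (by simp_all))
  simp only [pathEdge, Sym2.mem_iff, filter_or]
  exact (card_union_le _ _).trans (by omega)

lemma pathEdge_injective {α : Type*} {x : Fin (t + 1) → α} (hx : Function.Injective x) :
    Function.Injective (pathEdge x) := by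
  intro i j h
  simp only [pathEdge, Sym2.eq_iff, hx.eq_iff, Fin.ext_iff, Fin.val_castSucc, Fin.val_succ] at h
  omega

lemma exists_step {P : Fin (t + 1) → Prop} {j k : Fin (t + 1)} (hjk : j ≤ k) (hj : P j)
    (hk : ¬ P k) : ∃ i : Fin t, j ≤ i.castSucc ∧ i.succ ≤ k ∧ P i.castSucc ∧ ¬ P i.succ := by
  induction k using Fin.induction with
  | zero => exact absurd (Fin.le_zero_iff.1 hjk ▸ hj) hk
  | succ k ih =>
    have hjk' : j ≤ k.castSucc := Fin.le_castSucc_iff.2 (hjk.lt_of_ne fun h => hk (h ▸ hj))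
    by_cases hPk : P k.castSucc
    · exact ⟨k, hjk', le_rfl, hPk, hk⟩
    · obtain ⟨i, hji, hik, hi⟩ := ih hjk' hPk
      exact ⟨i, hji, hik.trans k.castSucc_lt_succ.le, hi⟩

variable {n : ℕ} {T : Finset (Edge n)}

lemma mem_of_not_cross_of_mem_Ioo {e : Edge n} {u v : Fin n} (h : ¬ Cross e s(u, v))
    (hu : u ∈ Ioo e.inf e.sup) (hv : v ∉ Ioo e.inf e.sup) : v ∈ e := by
  simp only [mem_iff_eq_inf_or_eq_sup, mem_Ioo, cross_iff_inf_sup, Sym2.inf_mk, Sym2.sup_mk] at *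
  grind

/-- A path could enter or leave the open span of its edge `e` only through an end of `e`. -/
lemma notMem_span_pathEdge (hT : NonCrossing T) {x : Fin (t + 1) → Fin n}
    (hx : Function.Injective x) (hpath : ∀ i, pathEdge x i ∈ T) {i : Fin t}
    (hfirst : x 0 ∉ Ioo (pathEdge x i).inf (pathEdge x i).sup)
    (hlast : x (Fin.last t) ∉ Ioo (pathEdge x i).inf (pathEdge x i).sup) (j : Fin (t + 1)) :
    x j ∉ Ioo (pathEdge x i).inf (pathEdge x i).sup := by
  intro hj
  have hnc k := hT _ (hpath i) _ (hpath k)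
  have hends k (hk : x k ∈ pathEdge x i) : k = i.castSucc ∨ k = i.succ := by
    simpa [pathEdge, hx.eq_iff] using hk
  rcases le_or_gt j i.castSucc with hji | hji
  · obtain ⟨k, -, hkj, hk, hk'⟩ := exists_step
      (P := fun k => x k ∉ Ioo (pathEdge x i).inf (pathEdge x i).sup) j.zero_le hfirst
      (not_not.2 hj)
    have hend := hends _ (mem_of_not_cross_of_mem_Ioo (Sym2.eq_swap ▸ hnc k) (not_not.1 hk') hk)
    simp only [Fin.ext_iff, Fin.le_def, Fin.val_castSucc, Fin.val_succ] at *
    omega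
  · obtain ⟨k, hjk, -, hk, hk'⟩ := exists_step
      (P := fun k => x k ∈ Ioo (pathEdge x i).inf (pathEdge x i).sup) j.le_last hj hlast
    have hend := hends _ (mem_of_not_cross_of_mem_Ioo (hnc k) hk hk')
    simp only [Fin.ext_iff, Fin.le_def, Fin.lt_def, Fin.val_castSucc, Fin.val_succ] at *
    omega

/-- A narrowest chord of `T` under `e` joins neighbours: a point strictly under it would have an
edge that is narrower still. -/
lemma NCST.exists_covBy_mem (hT : NCST T) {e : Edge n} (he : e ∈ T) :
    ∃ i j, i ⋖ j ∧ e.inf ≤ i ∧ j ≤ e.sup ∧ s(i, j) ∈ T := by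
  obtain ⟨f, hf, hmin⟩ := exists_min_image {f ∈ T | e.inf ≤ f.inf ∧ f.sup ≤ e.sup}
    (fun f => (f.sup - f.inf : ℕ)) ⟨e, by simpa⟩
  obtain ⟨hfT, hinf, hsup⟩ := mem_filter.1 hf
  have hle := f.inf_le_sup
  have hne : f.inf ≠ f.sup := fun h => hT.1.2.2 f hfT
    (by rw [← mk_inf_sup f]; exact Sym2.mk_isDiag_iff.2 h)
  refine ⟨f.inf, f.sup, ⟨by omega, fun c hc hc' => ?_⟩, hinf, hsup, by rwa [mk_inf_sup]⟩
  have : Nontrivial (Fin n) := ⟨_, _, hne⟩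
  obtain ⟨d, hcd⟩ := hT.1.1.preconnected.exists_adj_of_nontrivial c
  replace hcd : s(c, d) ∈ T := ((SimpleGraph.fromEdgeSet_adj _).1 hcd).1
  have hc_end := mem_iff_eq_inf_or_eq_sup.1 (Sym2.mem_mk_left c d)
  have hcd_le := s(c, d).inf_le_sup
  have hnc := hT.2 _ hfT _ hcd
  rw [cross_iff_inf_sup] at hnc
  have hwider := hmin _ (mem_filter.2 ⟨hcd, by omega⟩)
  omega

end Path

section Counting

variable {n t : ℕ} {T : Finset (Edge n)} {x : Fin (t + 1) → Fin n}

lemma eq_of_common_gap {e f : Edge n} {i j : Fin n} (hij : i < j) (hie : e.inf ≤ i)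
    (hje : j ≤ e.sup) (hif : f.inf ≤ i) (hjf : j ≤ f.sup) (he : ∀ v ∈ e, v ∉ Ioo f.inf f.sup)
    (hf : ∀ v ∈ f, v ∉ Ioo e.inf e.sup) : e = f := by
  simp only [mem_iff_eq_inf_or_eq_sup, forall_eq_or_imp, forall_eq, mem_Ioo] at he hf
  exact Sym2.inf_eq_inf_and_sup_eq_sup.1 ⟨by omega, by omega⟩

/-- No vertex of the path lies strictly under such an edge, so distinct such edges have distinct
border edges of `T` under them. -/
lemma card_pathEdge_notMem_Ico_le [NeZero n] (hT : NCST T) (hx : Function.Injective x)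
    (hpath : ∀ i, pathEdge x i ∈ T) (hx0 : x 0 = 0) :
    #{i | x (Fin.last t) ∉ Ico (pathEdge x i).inf (pathEdge x i).sup} ≤ #(spine ⊤ ∩ T) := by
  choose l r hlr hl hr hmem using fun i => hT.exists_covBy_mem (hpath i)
  refine card_le_card_of_injOn (fun i => s(l i, r i))
    (fun i _ => mem_inter.2 ⟨mem_spine.2 ⟨_, _, hlr i, le_top, rfl⟩, hmem i⟩) ?_
  have hout {i} (hi : x (Fin.last t) ∉ Ico (pathEdge x i).inf (pathEdge x i).sup) (j) :
      ∀ v ∈ pathEdge x j, v ∉ Ioo (pathEdge x i).inf (pathEdge x i).sup := by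
    have hpoint := notMem_span_pathEdge hT.2 hx hpath (by simp [hx0])
      fun h => hi (Ioo_subset_Ico_self h)
    intro v hv
    rcases Sym2.mem_iff.1 hv with rfl | rfl
    exacts [hpoint _, hpoint _]
  intro i hi j hj hij
  simp only [coe_filter, mem_univ, true_and, Set.mem_ofPred_eq] at hi hj
  have hlt := (hlr i).lt
  have hlt' := (hlr j).lt
  obtain ⟨hll, hrr⟩ : l i = l j ∧ r i = r j := by
    simp only [Sym2.eq_iff] at hij
    omega
  exact pathEdge_injective hx (eq_of_common_gap hlt (hl i) (hr i) (hll ▸ hl j) (hrr ▸ hr j)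
    (hout hj i) (hout hi j))

/-- The lowest point `a ≤ p` that `T` joins to one of the points `p + 1, …, b`, or `p` if there is
none. -/
def lowestAttachment (T : Finset (Edge n)) (p b : Fin n) : Fin n :=
  (insert p {a ∈ Iic p | ∃ b' ∈ Ioc p b, s(a, b') ∈ T}).min' (insert_nonempty _ _)

lemma lowestAttachment_le (T : Finset (Edge n)) (p b : Fin n) : lowestAttachment T p b ≤ p :=
  min'_le _ _ (mem_insert_self _ _)

lemma antitone_lowestAttachment (T : Finset (Edge n)) (p : Fin n) :
    Antitone (lowestAttachment T p) := fun _ _ hbc =>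
  min'_subset _ (insert_subset_insert _ (monotone_filter_right _ fun _ _ ⟨b', hb', h⟩ =>
    ⟨b', Ioc_subset_Ioc_right hbc hb', h⟩))

lemma lowestAttachment_leg_mem (hT : NonCrossing T) {p a b : Fin n} (ha : a ≤ p) (hb : p < b)
    (h : s(a, b) ∈ T) : s(lowestAttachment T p b, b) ∈ T := by
  have hle : lowestAttachment T p b ≤ a := min'_le _ _ <|
    mem_insert_of_mem (mem_filter.2 ⟨mem_Iic.2 ha, b, mem_Ioc.2 ⟨hb, le_rfl⟩, h⟩)
  have hmem : lowestAttachment T p b ∈ insert p {a ∈ Iic p | ∃ b' ∈ Ioc p b, s(a, b') ∈ T} :=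
    min'_mem _ _
  simp only [mem_insert, mem_filter, mem_Iic, mem_Ioc] at hmem
  rcases hmem with hp | ⟨-, b', hb', h'⟩
  · rwa [hle.antisymm (ha.trans hp.ge)]
  · have hnc := hT _ h' _ h
    rw [cross_mk_mk (by omega) (by omega)] at hnc
    have : lowestAttachment T p b = a ∨ b' = b := by omega
    rcases this with heq | rfl
    · rwa [heq]
    · exact h'

lemma card_pathEdge_mem_Ico_le [NeZero n] (hT : NonCrossing T) (hx : Function.Injective x)
    (hpath : ∀ i, pathEdge x i ∈ T) (p : Fin n) :
    #{i | p ∈ Ico (pathEdge x i).inf (pathEdge x i).sup} ≤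
      2 * #(caterpillar p (lowestAttachment T p) ∩ T) := by
  refine card_le_mul_card_image_of_maps_to (f := fun i =>
    s(lowestAttachment T p (pathEdge x i).sup, (pathEdge x i).sup)) (fun i hi => ?_) 2 fun e _ => ?_
  · obtain ⟨hinf, hsup⟩ := mem_Ico.1 (mem_filter.1 hi).2
    refine mem_inter.2 ⟨leg_mem_caterpillar hsup, lowestAttachment_leg_mem hT hinf hsup ?_⟩
    rw [mk_inf_sup]
    exact hpath i
  · refine (card_le_card fun i hi => ?_).trans (card_mem_pathEdge_le_two hx e.sup)
    simp only [mem_filter, mem_univ, true_and, mem_Ico] at hi ⊢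
    obtain ⟨⟨-, hp⟩, rfl⟩ := hi
    rw [Sym2.sup_mk, sup_of_le_right ((lowestAttachment_le ..).trans hp.le)]
    exact mem_iff_eq_inf_or_eq_sup.2 (.inr rfl)

lemma exists_flipSeq_of_path_start_eq_zero [NeZero n] {T₁ T₂ : Finset (Edge n)} (h₁ : NCST T₁)
    (h₂ : NCST T₂) (hx : Function.Injective x) (hpath : ∀ i, pathEdge x i ∈ T₁) (hx0 : x 0 = 0) :
    ∃ k, FlipSeq T₁ T₂ k ∧ 3 * k + t ≤ 6 * n := by
  let p := x (Fin.last t)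
  have hwithin := card_pathEdge_notMem_Ico_le h₁ hx hpath hx0
  have hacross := card_pathEdge_mem_Ico_le h₁.2 hx hpath p
  have hsplit := card_filter_add_card_filter_not (s := univ)
    fun i => p ∈ Ico (pathEdge x i).inf (pathEdge x i).sup
  obtain ⟨k, hk, hkle⟩ := exists_flipSeq_through_caterpillar (antitone_const (c := (⊤ : Fin n)))
    (fun _ => le_rfl) h₁ h₂
  obtain ⟨l, hl, hlle⟩ := exists_flipSeq_through_caterpillar (antitone_lowestAttachment T₁ p)
    (lowestAttachment_le T₁ p) h₁ h₂
  rw [caterpillar_top] at hkle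
  rw [card_fin] at hsplit
  have : #{i | p ∉ Ico (pathEdge x i).inf (pathEdge x i).sup} ≤ #(spine ⊤ ∩ T₁) := hwithin
  rcases le_total k l with hkl | hkl
  · exact ⟨k, hk, by omega⟩
  · exact ⟨l, hl, by omega⟩

end Counting

section Rotation

variable {n : ℕ}

/-- The permutations of the points that preserve crossing of chords, such as the rotations of the
polygon. -/
def crossPreserving (n : ℕ) : Subgroup (Equiv.Perm (Fin n)) where
  carrier := {r | ∀ e f : Edge n, Cross (e.map r) (f.map r) ↔ Cross e f}
  one_mem' := by simp
  mul_mem' {r s} hr hs e f := by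
    rw [Equiv.Perm.coe_mul, ← Sym2.map_map, ← Sym2.map_map, hr, hs]
  inv_mem' {r} hr e f := by
    rw [← hr, Sym2.map_map, Sym2.map_map]
    simp

lemma finRotate_mem_crossPreserving (n : ℕ) : finRotate n ∈ crossPreserving n := by
  have hval (i : Fin n) : (i + 1 < n ∧ (finRotate n i : ℕ) = i + 1) ∨
      ((i : ℕ) + 1 = n ∧ (finRotate n i : ℕ) = 0) := by
    cases n with
    | zero => exact i.elim0
    | succ m =>
      simp only [coe_finRotate, Fin.ext_iff, Fin.val_last]
      grind
  intro e f
  induction e using Sym2.ind with | _ a b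
  induction f using Sym2.ind with | _ c d
  have ha := hval a
  have hb := hval b
  have hc := hval c
  have hd := hval d
  simp only [Sym2.map_mk, cross_iff_inf_sup, Sym2.inf_mk, Sym2.sup_mk, Fin.lt_def, Fin.coe_min,
    Fin.coe_max]
  omega

lemma exists_crossPreserving_apply_eq_zero [NeZero n] (a : Fin n) :
    ∃ r ∈ crossPreserving n, r a = 0 := by
  refine ⟨(finRotate n ^ (a : ℕ))⁻¹, inv_mem (pow_mem (finRotate_mem_crossPreserving n) _), ?_⟩
  rw [Equiv.Perm.inv_eq_iff_eq, Equiv.Perm.coe_pow, ← finCycle_eq_finRotate_iterate,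
    finCycle_apply, zero_add]

variable {r : Equiv.Perm (Fin n)} {T U : Finset (Edge n)} {k : ℕ}

lemma IsSpanningTree.map (hT : IsSpanningTree T) (r : Equiv.Perm (Fin n)) :
    IsSpanningTree (T.image (Sym2.map r)) := by
  refine isSpanningTree_of_connected_of_card_le ?_ (card_image_le.trans hT.2.1.le)
  let φ : SimpleGraph.fromEdgeSet (T : Set (Edge n)) →g
      SimpleGraph.fromEdgeSet (T.image (Sym2.map r) : Set (Edge n)) :=
    ⟨r, fun {a b} hab => by
      rw [SimpleGraph.fromEdgeSet_adj] at hab ⊢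
      exact ⟨mem_image_of_mem (Sym2.map r) hab.1, r.injective.ne hab.2⟩⟩
  exact hT.1.map φ r.surjective

lemma NCST.map (hT : NCST T) (hr : r ∈ crossPreserving n) : NCST (T.image (Sym2.map r)) := by
  refine ⟨hT.1.map r, ?_⟩
  simp only [NonCrossing, forall_mem_image]
  exact fun e he f hf h => hT.2 e he f hf ((hr e f).1 h)

lemma Flip.map (h : Flip T U) (hr : r ∈ crossPreserving n) :
    Flip (T.image (Sym2.map r)) (U.image (Sym2.map r)) := by
  obtain ⟨hT, hU, e, he, f, hf, rfl⟩ := h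
  have hinj := Sym2.map.injective r.injective
  refine ⟨hT.map hr, hU.map hr, _, mem_image_of_mem _ he, f.map r, ?_, ?_⟩
  · rwa [hinj.mem_finset_image]
  · rw [image_insert, image_erase hinj]

lemma FlipSeq.map (h : FlipSeq T U k) (hr : r ∈ crossPreserving n) :
    FlipSeq (T.image (Sym2.map r)) (U.image (Sym2.map r)) k := by
  obtain ⟨f, rfl, rfl, hf⟩ := h
  exact ⟨fun i => (f i).image (Sym2.map r), rfl, rfl, fun i hi => (hf i hi).map hr⟩

lemma FlipSeq.of_map (hr : r ∈ crossPreserving n)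
    (h : FlipSeq (T.image (Sym2.map r)) (U.image (Sym2.map r)) k) : FlipSeq T U k := by
  simpa [image_image, ← Sym2.map_comp] using h.map (inv_mem hr)

end Rotation

/-- If `T₁` contains a subpath with `t` edges, there is a flip sequence between `T₁`
and `T₂` of length at most `2n - t/3`. -/
theorem subpath_flip {n t : ℕ} (T₁ T₂ : Finset (Edge n))
    (h₁ : NCST T₁) (h₂ : NCST T₂)
    (x : Fin (t + 1) → Fin n) (hinj : Function.Injective x)
    (hpath : ∀ i : Fin t, s(x i.castSucc, x i.succ) ∈ T₁) :
    ∃ k : ℕ, FlipSeq T₁ T₂ k ∧ (k : ℝ) ≤ 2 * n - (t : ℝ) / 3 := by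
  have := (x 0).neZero
  obtain ⟨r, hr, hr0⟩ := exists_crossPreserving_apply_eq_zero (x 0)
  obtain ⟨k, hk, hle⟩ := exists_flipSeq_of_path_start_eq_zero (h₁.map hr) (h₂.map hr)
    (r.injective.comp hinj) (fun i => mem_image_of_mem (Sym2.map r) (hpath i)) hr0
  refine ⟨k, hk.of_map hr, ?_⟩
  have : (3 * k + t : ℝ) ≤ 6 * n := by exact_mod_cast hle
  linarith
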